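/- Let α ∈ (0,1), β > 1 and c > 0. Then, as x → ∞, Σ_{n=1}^∞ n^{−α}(x + cn)^{−β} ∼ c^{α−1} B(1 − α, β + α − 1) · x^{1−α−β}, where B denotes the Beta function; in particular, for any fixed N ≥ 1, Σ_{n=1}^N n^{−α}(x + cn)^{−β} = O(x^{−β}) = o(x^{1−α−β}). -/

import Mathlib

/- Asymptotics of the series in Example 2:  for `α ∈ (0,1)`, `β > 1`, `c > 0`, as `x → ∞`,
`Σ_{n=1}^∞ n^{-α} (x + cn)^{-β} ∼ c^{α-1} B(1-α, β+α-1) x^{1-α-β}`, where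
`B(a,b) = ∫_0^1 t^{a-1} (1-t)^{b-1} dt` is the Euler Beta function; in particular, for any
fixed `N ≥ 1`, `Σ_{n=1}^N n^{-α} (x + cn)^{-β} = O(x^{-β}) = o(x^{1-α-β})`. -/

open Filter Asymptotics

noncomputable section

/-- The Euler Beta function `B(a,b) = ∫_0^1 t^{a-1} (1-t)^{b-1} dt`. -/
def eulerBeta (a b : ℝ) : ℝ :=
  ∫ t in Set.Ioo (0 : ℝ) 1, t ^ (a - 1) * (1 - t) ^ (b - 1)

open MeasureTheory Set in
lemma aux_int (α β c x : ℝ) (hα0 : 0 < α) (hα1 : α < 1) (hβ : 1 < β) (hc : 0 < c) (hx : 0 < x) :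
    IntegrableOn (fun t : ℝ => t ^ (-α) * (x + c * t) ^ (-β)) (Ioc 0 1) ∧
    IntegrableOn (fun t : ℝ => t ^ (-α) * (x + c * t) ^ (-β)) (Ioi 1) ∧
    ∫ t in Ioc (0:ℝ) 1, t ^ (-α) * (x + c * t) ^ (-β) ≤ (1 / (1 - α)) * x ^ (-β) := by
  have hm : Measurable (fun t : ℝ => t ^ (-α) * (x + c * t) ^ (-β)) := by fun_prop
  have h0 : IntegrableOn (fun t : ℝ => t ^ (-α) * x ^ (-β)) (Ioc 0 1) := by
    have := intervalIntegral.intervalIntegrable_rpow' (a := 0) (b := 1) (r := -α) (by linarith)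
    rw [intervalIntegrable_iff_integrableOn_Ioc_of_le zero_le_one] at this
    exact this.mul_const _
  have hle : ∀ t ∈ Ioc (0:ℝ) 1, t ^ (-α) * (x + c * t) ^ (-β) ≤ t ^ (-α) * x ^ (-β) := by
    intro t ht
    have ht0 := ht.1
    gcongr ?_ * ?_
    refine Real.rpow_le_rpow_of_nonpos hx ?_ (by linarith)
    nlinarith
  have hi0 : IntegrableOn (fun t : ℝ => t ^ (-α) * (x + c * t) ^ (-β)) (Ioc 0 1) := by
    refine Integrable.mono' h0 hm.aestronglyMeasurable ?_
    filter_upwards [ae_restrict_mem measurableSet_Ioc] with t ht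
    have ht0 := ht.1
    rw [Real.norm_of_nonneg (by positivity)]
    exact hle t ht
  refine ⟨hi0, ?_, ?_⟩
  · have h1 : IntegrableOn (fun t : ℝ => c ^ (-β) * t ^ (-β)) (Ioi 1) :=
      (integrableOn_Ioi_rpow_of_lt (by linarith) one_pos).const_mul _
    refine Integrable.mono' h1 hm.aestronglyMeasurable ?_
    filter_upwards [ae_restrict_mem measurableSet_Ioi] with t ht
    have ht1 : 1 < t := ht
    have ht0 : 0 < t := by linarith
    rw [Real.norm_of_nonneg (by positivity), ← Real.mul_rpow hc.le ht0.le]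
    have e1 : t ^ (-α) ≤ 1 := Real.rpow_le_one_of_one_le_of_nonpos ht1.le (by linarith)
    have e2 : (x + c * t) ^ (-β) ≤ (c * t) ^ (-β) :=
      Real.rpow_le_rpow_of_nonpos (by positivity) (by linarith) (by linarith)
    calc _ ≤ 1 * (c * t) ^ (-β) := by gcongr
      _ = _ := one_mul _
  · calc _ ≤ ∫ t in Ioc (0:ℝ) 1, t ^ (-α) * x ^ (-β) :=
          setIntegral_mono_on hi0 h0 measurableSet_Ioc hle
      _ = _ := by
        rw [integral_mul_const, ← intervalIntegral.integral_of_le zero_le_one,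
          integral_rpow (Or.inl (by linarith))]
        rw [Real.one_rpow, Real.zero_rpow (by linarith)]
        congr 2 <;> ring

open MeasureTheory Set in
lemma aux_beta (α β c x : ℝ) (hc : 0 < c) (hx : 0 < x) :
    ∫ t in Ioi (0:ℝ), t ^ (-α) * (x + c * t) ^ (-β) =
      c ^ (α - 1) * eulerBeta (1 - α) (β + α - 1) * x ^ (1 - α - β) := by
  have him : (fun u : ℝ => x / c * (u / (1 - u))) '' Ioo 0 1 = Ioi 0 := by
    ext t
    simp only [mem_image, mem_Ioo, mem_Ioi]
    constructor
    · rintro ⟨u, ⟨h0, h1⟩, rfl⟩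
      have : 0 < 1 - u := by linarith
      positivity
    · intro ht
      refine ⟨c * t / (x + c * t), ⟨by positivity, ?_⟩, ?_⟩
      · rw [div_lt_one (by positivity)]; linarith
      · have : x + c * t ≠ 0 := by positivity
        have h2 : 1 - c * t / (x + c * t) = x / (x + c * t) := by field_simp; ring
        rw [h2]; field_simp
  have hd : ∀ u ∈ Ioo (0:ℝ) 1, HasDerivWithinAt (fun u : ℝ => x / c * (u / (1 - u)))
      (x / c * (1 / (1 - u) ^ 2)) (Ioo 0 1) u := by
    intro u hu
    have h1 : 1 - u ≠ 0 := by linarith [hu.2]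
    have := (((hasDerivAt_id u).div ((hasDerivAt_id u).const_sub 1) h1).const_mul
      (x / c)).hasDerivWithinAt (s := Ioo 0 1)
    convert! this using 1
    simp
  have hinj : InjOn (fun u : ℝ => x / c * (u / (1 - u))) (Ioo 0 1) := by
    intro u hu v hv h
    have h1 : 1 - u ≠ 0 := by linarith [hu.2]
    have h2 : 1 - v ≠ 0 := by linarith [hv.2]
    have h3 := mul_left_cancel₀ (by positivity) h
    rw [div_eq_div_iff h1 h2] at h3
    linarith
  rw [← him, integral_image_eq_integral_abs_deriv_smul measurableSet_Ioo hd hinj, eulerBeta,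
    ← integral_const_mul, ← integral_mul_const]
  refine setIntegral_congr_fun measurableSet_Ioo ?_
  intro u hu
  have hu0 := hu.1
  have h1 : 0 < 1 - u := by linarith [hu.2]
  have e1 : x + c * (x / c * (u / (1 - u))) = x / (1 - u) := by field_simp; ring
  simp only [smul_eq_mul]
  rw [e1, abs_of_pos (by positivity)]
  have l (a b : ℝ) (ha : 0 < a) (hb : 0 < b) (h : Real.log a = Real.log b) : a = b :=
    Real.log_injOn_pos ha hb h
  apply l _ _ (by positivity) (by positivity)
  have p (y r : ℝ) (hy : 0 < y) : y ^ r ≠ 0 := (Real.rpow_pos_of_pos hy r).ne'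
  rw [Real.log_mul (by positivity) (by positivity), Real.log_mul (by positivity) (by positivity),
    Real.log_mul (by positivity) (by positivity), Real.log_mul (by positivity) (by positivity),
    Real.log_mul (by positivity) (by positivity), Real.log_mul (by positivity) (by positivity),
    Real.log_rpow (by positivity), Real.log_rpow (by positivity), Real.log_rpow (by positivity),
    Real.log_rpow (by positivity), Real.log_rpow (by positivity), Real.log_rpow (by positivity),
    Real.log_mul (by positivity) (by positivity), Real.log_div (by positivity) (by positivity),
    Real.log_div (by positivity) (by positivity), Real.log_div (by positivity) (by positivity),
    Real.log_div (by positivity) (by positivity), Real.log_pow, Real.log_one]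
  push_cast
  ring

open MeasureTheory Set in
lemma aux_bound (α β c x : ℝ) (hα0 : 0 < α) (hα1 : α < 1) (hβ : 1 < β) (hc : 0 < c) (hx : 0 < x) :
    |(∑' n : ℕ, ((n : ℝ) + 1) ^ (-α) * (x + c * ((n : ℝ) + 1)) ^ (-β)) -
      c ^ (α - 1) * eulerBeta (1 - α) (β + α - 1) * x ^ (1 - α - β)| ≤
      (1 / (1 - α)) * x ^ (-β) := by
  obtain ⟨i0, i1, hb⟩ := aux_int α β c x hα0 hα1 hβ hc hx
  rw [← aux_beta α β c x hc hx]
  set f : ℝ → ℝ := fun t : ℝ => t ^ (-α) * (x + c * t) ^ (-β) with hf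
  have hsplit : ∫ t in Ioi (0:ℝ), f t = (∫ t in Ioc (0:ℝ) 1, f t) + ∫ t in Ioi (1:ℝ), f t := by
    rw [← Ioc_union_Ioi_eq_Ioi zero_le_one, setIntegral_union (Ioc_disjoint_Ioi le_rfl)
      measurableSet_Ioi i0 i1]
  have hnn : ∀ t : ℝ, 0 < t → 0 ≤ f t := fun t ht => by simp only [hf]; positivity
  have anti : AntitoneOn f (Ici ((1:ℕ) : ℝ)) := by
    intro a ha b hb hab
    have ha1 : (1:ℝ) ≤ a := by simpa using ha
    have ha0 : 0 < a := by linarith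
    have hb0 : 0 < b := by linarith
    simp only [hf]
    have e1 : b ^ (-α) ≤ a ^ (-α) := Real.rpow_le_rpow_of_nonpos ha0 hab (by linarith)
    have e2 : (x + c * b) ^ (-β) ≤ (x + c * a) ^ (-β) :=
      Real.rpow_le_rpow_of_nonpos (by positivity) (by gcongr) (by linarith)
    gcongr
  have i1' : IntegrableOn f (Ioi ((1:ℕ) : ℝ)) := by simpa using i1
  have nn : ∀ t ∈ Ioi ((1:ℕ) : ℝ), 0 ≤ f t := fun t ht => hnn t (by
    have : (1:ℝ) < t := by simpa using ht
    linarith)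
  have hs : Summable (fun n : ℕ => f n) := anti.summable_of_integrableOn_Ioi i1' nn
  have lo := anti.integral_le_tsum_comp_add 1 hs nn
  have up := anti.tsum_comp_add_le_integral 1 i1' nn
  have hz := ((summable_nat_add_iff 1).2 hs).tsum_eq_zero_add
  have hS : (∑' n : ℕ, ((n : ℝ) + 1) ^ (-α) * (x + c * ((n : ℝ) + 1)) ^ (-β)) =
      ∑' n : ℕ, f (n + 1 : ℕ) := by
    simp [hf]
  have hf1 : f (0 + 1 : ℕ) ≤ 1 / (1 - α) * x ^ (-β) := by
    have e2 : (x + c) ^ (-β) ≤ x ^ (-β) :=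
      Real.rpow_le_rpow_of_nonpos hx (by linarith) (by linarith)
    have e3 : 1 ≤ 1 / (1 - α) := by rw [le_div_iff₀ (by linarith)]; linarith
    have e4 : 0 < x ^ (-β) := by positivity
    have : f (0 + 1 : ℕ) = (x + c) ^ (-β) := by simp [hf]
    rw [this]; nlinarith
  have hpos : 0 ≤ ∫ t in Ioc (0:ℝ) 1, f t :=
    setIntegral_nonneg measurableSet_Ioc fun t ht => hnn t ht.1
  rw [hS, hsplit]
  simp only [Nat.cast_one] at lo up
  rw [abs_le]
  have hu : ∑' n : ℕ, f (n + 1 : ℕ) ≤ 1 / (1 - α) * x ^ (-β) + ∫ t in Ioi (1:ℝ), f t :=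
    hz.trans_le (add_le_add hf1 up)
  constructor <;> linarith

open MeasureTheory Set in
lemma aux_pos (α β : ℝ) (hα0 : 0 < α) (hα1 : α < 1) (hβ : 1 < β) :
    0 < eulerBeta (1 - α) (β + α - 1) := by
  obtain ⟨i0, i1, hb⟩ := aux_int α β 1 1 hα0 hα1 hβ one_pos one_pos
  have h := aux_beta α β 1 1 one_pos one_pos
  simp only [Real.one_rpow, one_mul, mul_one] at h i0 i1
  rw [← h]
  have hi := i0.union i1
  rw [Ioc_union_Ioi_eq_Ioi zero_le_one] at hi
  have hnn : ∀ t : ℝ, 0 < t → 0 < t ^ (-α) * (1 + t) ^ (-β) := fun t ht => by positivity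
  rw [setIntegral_pos_iff_support_of_nonneg_ae _ hi]
  · have : Ioi (0:ℝ) ⊆ Function.support fun t : ℝ => t ^ (-α) * (1 + t) ^ (-β) :=
      fun t ht => (hnn t ht).ne'
    rw [inter_eq_self_of_subset_right this]
    simp
  · filter_upwards [ae_restrict_mem measurableSet_Ioi] with t ht
    exact (hnn t ht).le

theorem statement19 (α β c : ℝ) (hα0 : 0 < α) (hα1 : α < 1) (hβ : 1 < β) (hc : 0 < c) :
    -- `Σ_{n=1}^∞ n^{-α} (x+cn)^{-β} ∼ c^{α-1} B(1-α, β+α-1) x^{1-α-β}` as `x → ∞`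
    Tendsto (fun x : ℝ =>
        (∑' n : ℕ, ((n : ℝ) + 1) ^ (-α) * (x + c * ((n : ℝ) + 1)) ^ (-β)) /
          (c ^ (α - 1) * eulerBeta (1 - α) (β + α - 1) * x ^ (1 - α - β)))
      atTop (nhds 1) ∧
    -- for any fixed `N ≥ 1`, `Σ_{n=1}^N n^{-α} (x+cn)^{-β} = O(x^{-β}) = o(x^{1-α-β})`
    (∀ N : ℕ, 1 ≤ N →
      ((fun x : ℝ => ∑ n ∈ Finset.Icc 1 N, (n : ℝ) ^ (-α) * (x + c * n) ^ (-β))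
          =O[atTop] fun x : ℝ => x ^ (-β)) ∧
      ((fun x : ℝ => ∑ n ∈ Finset.Icc 1 N, (n : ℝ) ^ (-α) * (x + c * n) ^ (-β))
          =o[atTop] fun x : ℝ => x ^ (1 - α - β))) ∧
    -- and `x^{-β} = o(x^{1-α-β})`
    ((fun x : ℝ => x ^ (-β)) =o[atTop] fun x : ℝ => x ^ (1 - α - β)) := by
  have hlim : Tendsto (fun x : ℝ => x ^ (-(1 - α))) atTop (nhds 0) :=
    tendsto_rpow_neg_atTop (by linarith)
  have hlo : (fun x : ℝ => x ^ (-β)) =o[atTop] fun x : ℝ => x ^ (1 - α - β) := by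
    refine (isLittleO_iff_tendsto' ?_).2 ?_
    · filter_upwards [eventually_gt_atTop 0] with x hx h
      exact absurd h (Real.rpow_pos_of_pos hx _).ne'
    · refine hlim.congr' ?_
      filter_upwards [eventually_gt_atTop 0] with x hx
      rw [← Real.rpow_sub hx]
      congr 1; ring
  have hO : ∀ N : ℕ, (fun x : ℝ => ∑ n ∈ Finset.Icc 1 N, (n : ℝ) ^ (-α) * (x + c * n) ^ (-β))
          =O[atTop] fun x : ℝ => x ^ (-β) := by
    intro N
    refine IsBigO.fun_sum fun n _ => ?_
    refine IsBigO.const_mul_left ?_ _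
    refine IsBigO.of_bound 1 ?_
    filter_upwards [eventually_gt_atTop 0] with x hx
    have : 0 ≤ c * n := by positivity
    rw [Real.norm_of_nonneg (by positivity), Real.norm_of_nonneg (by positivity), one_mul]
    exact Real.rpow_le_rpow_of_nonpos hx (by linarith) (by linarith)
  refine ⟨?_, fun N _ => ⟨hO N, (hO N).trans_isLittleO hlo⟩, hlo⟩
  have hB := aux_pos α β hα0 hα1 hβ
  set B := eulerBeta (1 - α) (β + α - 1) with hBdef
  have hK : 0 < c ^ (α - 1) * B := by positivity
  rw [tendsto_iff_norm_sub_tendsto_zero]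
  have hlim2 := hlim.const_mul (1 / (1 - α) / (c ^ (α - 1) * B))
  rw [mul_zero] at hlim2
  refine squeeze_zero' (Eventually.of_forall fun x => norm_nonneg _) ?_ hlim2
  filter_upwards [eventually_gt_atTop 0] with x hx
  have hb := aux_bound α β c x hα0 hα1 hβ hc hx
  rw [← hBdef] at hb
  have hD : 0 < c ^ (α - 1) * B * x ^ (1 - α - β) := by positivity
  rw [div_sub_one hD.ne', Real.norm_eq_abs, abs_div, abs_of_pos hD, div_le_iff₀ hD]
  refine hb.trans (le_of_eq ?_)
  have : x ^ (-β) = x ^ (-(1 - α)) * x ^ (1 - α - β) := by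
    rw [← Real.rpow_add hx]; congr 1; ring
  rw [this]
  field_simp


end
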